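/- Consider the inverted pendulum mass matrix on ℝ³: g₁₁ = 1, g₁₂ = −a cos(x¹), g₁₃ = −a sin(x¹), g₂₂ = g₃₃ = 1, g₂₃ = 0, with 0 < a < 1. Let U ⊆ {x ∈ ℝ³ : sin(x¹) ≠ 0} be open. A smooth map λ = (λ¹,λ²,λ³) : U → ℝ³ satisfies the λ-equations ∂(g_{1i}λ^i)/∂x^k − 2[k1,i]λ^i = 0 (k = 1,2,3) if and only if the function ν := λ¹ − a cos(x¹)λ² − a sin(x¹)λ³ satisfies ∂ν/∂x² = ∂ν/∂x³ = 0 and the identities λ¹ = ν + (1/2)cot(x¹) ∂ν/∂x¹ + a λ³/sin(x¹) and λ² = (∂ν/∂x¹)/(2a sin(x¹)) + cot(x¹) λ³ hold on U. In particular, λ³ may be an arbitrary smooth function and, when U has connected slices in the x¹-direction, ν is an arbitrary smooth function of x¹ alone. -/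

import Mathlib

/-- Partial derivative in the `k`-th coordinate direction. -/
noncomputable def pd {n : ℕ} (k : Fin n) (f : (Fin n → ℝ) → ℝ) (x : Fin n → ℝ) : ℝ :=
  fderiv ℝ f x (Pi.single k 1)

/-- Christoffel symbol of the first kind `[ij,k]` of the matrix-valued map `g`. -/
noncomputable def chr {n : ℕ} (g : (Fin n → ℝ) → Matrix (Fin n) (Fin n) ℝ)
    (i j k : Fin n) (x : Fin n → ℝ) : ℝ :=
  (1/2) * (pd i (fun y => g y j k) x + pd j (fun y => g y i k) x - pd k (fun y => g y i j) x)

/-- Mass matrix of the inverted pendulum in a vertical plane. -/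
noncomputable def gPend (a : ℝ) (x : Fin 3 → ℝ) : Matrix (Fin 3) (Fin 3) ℝ :=
  !![1, -a * Real.cos (x 0), -a * Real.sin (x 0);
     -a * Real.cos (x 0), 1, 0;
     -a * Real.sin (x 0), 0, 1]

/-!
The mass matrix depends on the angle `x¹` alone, and its lower `2 × 2` block is constant. For
`k = 2, 3` the contraction `2 [k1,i] λ^i` therefore vanishes, the two copies of `∂g_{k1}/∂x¹ λ¹`
cancelling, so the `λ`-equation says that `ν` does not depend on `x^k`. For `k = 1` it is the
relation `∂ν/∂x¹ = 2a (sin x¹ λ² − cos x¹ λ³)`, which is solved for `λ²` on dividing by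
`2a sin x¹`. The identity for `λ¹` comes from inserting this value of `∂ν/∂x¹` and using
`sin² + cos² = 1`.
-/

open Real

section OneCoordinate

variable {n : ℕ} {c : Fin n} {x : Fin n → ℝ}

lemma pd_comp_apply {φ : ℝ → ℝ} {φ' : ℝ} (hφ : HasDerivAt φ φ' (x c)) (k : Fin n) :
    pd k (fun y => φ (y c)) x = if k = c then φ' else 0 := by
  have hcomp : HasFDerivAt (fun y : Fin n → ℝ => φ (y c))
      (φ' • ContinuousLinearMap.proj (R := ℝ) (φ := fun _ : Fin n => ℝ) c) x :=
    hφ.comp_hasFDerivAt x (hasFDerivAt_apply c x)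
  rw [pd, hcomp.fderiv]
  simp [Pi.single_apply, eq_comm]

variable {M : ℝ → Matrix (Fin n) (Fin n) ℝ} {M' : Matrix (Fin n) (Fin n) ℝ}

lemma chr_comp_apply (hM : ∀ i j, HasDerivAt (fun t => M t i j) (M' i j) (x c)) (i j k : Fin n) :
    chr (fun y => M (y c)) i j k x =
      1 / 2 * ((if i = c then M' j k else 0) + (if j = c then M' i k else 0)
        - (if k = c then M' i j else 0)) := by
  simp only [chr, pd_comp_apply (hM _ _)]

lemma two_mul_sum_chr_comp_apply (hM : ∀ i j, HasDerivAt (fun t => M t i j) (M' i j) (x c))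
    (k : Fin n) (v : Fin n → ℝ) :
    2 * ∑ i, chr (fun y => M (y c)) k c i x * v i =
      (if k = c then ∑ i, M' c i * v i else 0) + ∑ i, M' k i * v i - M' k c * v c := by
  calc 2 * ∑ i, chr (fun y => M (y c)) k c i x * v i
      = ∑ i, ((if k = c then M' c i * v i else 0) + M' k i * v i
          - if i = c then M' k c * v i else 0) := by
        rw [Finset.mul_sum]
        refine Finset.sum_congr rfl fun i _ => ?_
        rw [chr_comp_apply hM, if_pos rfl]
        split_ifs <;> ring
    _ = (if k = c then ∑ i, M' c i * v i else 0) + ∑ i, M' k i * v i - M' k c * v c := by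
        rw [Finset.sum_sub_distrib, Finset.sum_add_distrib, Finset.sum_ite_eq',
          if_pos (Finset.mem_univ c)]
        split_ifs <;> simp only [Finset.sum_const_zero]

end OneCoordinate

section Pendulum

variable {a : ℝ} {x : Fin 3 → ℝ}

/-- The derivative of the pendulum mass matrix with respect to the angle `θ = x¹`, the only
coordinate on which the matrix depends. -/
noncomputable def gPendDeriv (a θ : ℝ) : Matrix (Fin 3) (Fin 3) ℝ :=
  !![0, a * sin θ, -a * cos θ;
     a * sin θ, 0, 0;
     -a * cos θ, 0, 0]

lemma hasDerivAt_gPend (a θ : ℝ) (i j : Fin 3) :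
    HasDerivAt (fun t => gPend a (fun _ => t) i j) (gPendDeriv a θ i j) θ := by
  have hcos : HasDerivAt (fun t => -a * cos t) (a * sin θ) θ := by
    simpa only [neg_mul_neg] using (hasDerivAt_cos θ).const_mul (-a)
  have hsin : HasDerivAt (fun t => -a * sin t) (-a * cos θ) θ :=
    (hasDerivAt_sin θ).const_mul (-a)
  fin_cases i <;> fin_cases j <;>
    first | exact hasDerivAt_const θ _ | exact hcos | exact hsin

lemma two_mul_sum_chr_gPend (a : ℝ) (x : Fin 3 → ℝ) (k : Fin 3) (v : Fin 3 → ℝ) :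
    2 * ∑ i, chr (gPend a) k 0 i x * v i =
      if k = 0 then 2 * a * (sin (x 0) * v 1 - cos (x 0) * v 2) else 0 := by
  -- `gPend a y` is definitionally `gPend a (fun _ => y 0)`
  refine (two_mul_sum_chr_comp_apply (M := fun t => gPend a fun _ => t)
    (hasDerivAt_gPend a (x 0)) k v).trans ?_
  fin_cases k
  · simp only [gPendDeriv, Fin.sum_univ_three, Matrix.of_apply, Matrix.cons_val, Fin.zero_eta,
      if_true]
    ring
  all_goals simp [Fin.sum_univ_three, gPendDeriv]

/-- The function `ν = g_{1i} λ^i` of the pendulum, written out in coordinates. -/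
noncomputable def pendNu (a : ℝ) (lam : (Fin 3 → ℝ) → Fin 3 → ℝ) (x : Fin 3 → ℝ) : ℝ :=
  lam x 0 - a * cos (x 0) * lam x 1 - a * sin (x 0) * lam x 2

lemma sum_gPend_mul_eq_pendNu (a : ℝ) (lam : (Fin 3 → ℝ) → Fin 3 → ℝ) :
    (fun y => ∑ i, gPend a y 0 i * lam y i) = pendNu a lam := by
  funext y
  simp only [Fin.sum_univ_three, gPend, pendNu, Matrix.of_apply, Matrix.cons_val]
  ring

lemma differentiableAt_pendNu {lam : (Fin 3 → ℝ) → Fin 3 → ℝ}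
    (hlam : ∀ i, DifferentiableAt ℝ (fun y => lam y i) x) :
    DifferentiableAt ℝ (pendNu a lam) x := by
  unfold pendNu
  fun_prop

lemma pendulum_lambda_equations_iff {lam : (Fin 3 → ℝ) → Fin 3 → ℝ}
    {ν' : (Fin 3 → ℝ) →L[ℝ] ℝ} (hν : HasFDerivAt (pendNu a lam) ν' x) :
    (∀ k : Fin 3, pd k (fun y => ∑ i, gPend a y 0 i * lam y i) x
        - 2 * ∑ i, chr (gPend a) k 0 i x * lam x i = 0) ↔
      ν' (Pi.single 0 1) = 2 * a * (sin (x 0) * lam x 1 - cos (x 0) * lam x 2) ∧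
        ν' (Pi.single 1 1) = 0 ∧ ν' (Pi.single 2 1) = 0 := by
  simp only [sum_gPend_mul_eq_pendNu, two_mul_sum_chr_gPend, pd, hν.fderiv, sub_eq_zero]
  simp [Fin.forall_fin_succ]

end Pendulum

section Algebra

variable {a s c d v w : ℝ}

lemma eq_two_mul_sub_iff_eq_div_add (ha : a ≠ 0) (hs : s ≠ 0) :
    d = 2 * a * (s * v - c * w) ↔ v = d / (2 * a * s) + c / s * w := by
  field_simp
  constructor <;> intro h <;> linear_combination -h

lemma eq_sub_sub_add_of_sq_add_sq (hs : s ≠ 0) (hsc : s ^ 2 + c ^ 2 = 1) (u : ℝ)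
    (hd : d = 2 * a * (s * v - c * w)) :
    u = (u - a * c * v - a * s * w) + 1 / 2 * (c / s) * d + a * w / s := by
  rw [hd]
  field_simp
  linear_combination a * w * hsc

end Algebra

theorem pendulum_lambda_characterization_general {a : ℝ} (ha : a ≠ 0) {x : Fin 3 → ℝ}
    (hx : sin (x 0) ≠ 0) {lam : (Fin 3 → ℝ) → Fin 3 → ℝ} {ν' : (Fin 3 → ℝ) →L[ℝ] ℝ}
    (hν : HasFDerivAt (pendNu a lam) ν' x) :
    (∀ k : Fin 3, pd k (fun y => ∑ i, gPend a y 0 i * lam y i) x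
        - 2 * ∑ i, chr (gPend a) k 0 i x * lam x i = 0) ↔
      ν' (Pi.single 1 1) = 0 ∧ ν' (Pi.single 2 1) = 0 ∧
        lam x 0 = pendNu a lam x + 1 / 2 * (cos (x 0) / sin (x 0)) * ν' (Pi.single 0 1)
          + a * lam x 2 / sin (x 0) ∧
        lam x 1 = ν' (Pi.single 0 1) / (2 * a * sin (x 0))
          + cos (x 0) / sin (x 0) * lam x 2 := by
  rw [pendulum_lambda_equations_iff hν]
  have hsolve := eq_two_mul_sub_iff_eq_div_add (d := ν' (Pi.single 0 1)) (v := lam x 1)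
    (c := cos (x 0)) (w := lam x 2) ha hx
  constructor
  · rintro ⟨h₀, h₁, h₂⟩
    exact ⟨h₁, h₂, eq_sub_sub_add_of_sq_add_sq hx (sin_sq_add_cos_sq _) _ h₀, hsolve.mp h₀⟩
  · rintro ⟨h₁, h₂, -, hlam₁⟩
    exact ⟨hsolve.mpr hlam₁, h₁, h₂⟩

/-- Characterization of all solutions to the λ-equations for the inverted
pendulum in a vertical plane, on a region where `sin x¹ ≠ 0`. -/
theorem pendulum_lambda_characterization (a : ℝ) (ha : 0 < a) (ha1 : a < 1)
    (U : Set (Fin 3 → ℝ)) (hUopen : IsOpen U)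
    (hU : U ⊆ {x : Fin 3 → ℝ | Real.sin (x 0) ≠ 0})
    (lam : (Fin 3 → ℝ) → Fin 3 → ℝ)
    (hlam : ∀ i, ContDiffOn ℝ (⊤ : ℕ∞) (fun x => lam x i) U) :
    -- λ satisfies the λ-equations on U …
    (∀ x ∈ U, ∀ k : Fin 3,
        pd k (fun y => ∑ i, gPend a y 0 i * lam y i) x
          - 2 * ∑ i, chr (gPend a) k 0 i x * lam x i = 0)
    ↔
    -- … iff ν = λ¹ − a cos x¹ λ² − a sin x¹ λ³ depends on x¹ only and the
    -- identities for λ¹ and λ² hold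
    (∀ x ∈ U,
        pd 1 (fun y => lam y 0 - a * Real.cos (y 0) * lam y 1
            - a * Real.sin (y 0) * lam y 2) x = 0 ∧
        pd 2 (fun y => lam y 0 - a * Real.cos (y 0) * lam y 1
            - a * Real.sin (y 0) * lam y 2) x = 0 ∧
        lam x 0 = (lam x 0 - a * Real.cos (x 0) * lam x 1 - a * Real.sin (x 0) * lam x 2)
            + (1/2) * (Real.cos (x 0) / Real.sin (x 0)) *
              pd 0 (fun y => lam y 0 - a * Real.cos (y 0) * lam y 1
                - a * Real.sin (y 0) * lam y 2) x
            + a * lam x 2 / Real.sin (x 0) ∧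
        lam x 1 = pd 0 (fun y => lam y 0 - a * Real.cos (y 0) * lam y 1
              - a * Real.sin (y 0) * lam y 2) x / (2 * a * Real.sin (x 0))
            + (Real.cos (x 0) / Real.sin (x 0)) * lam x 2) := by
  refine forall₂_congr fun x hx => pendulum_lambda_characterization_general ha.ne' (hU hx)
    (differentiableAt_pendNu fun i => ?_).hasFDerivAt
  exact ((hlam i).contDiffAt (hUopen.mem_nhds hx)).differentiableAt (by simp)
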